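/- Every Cohen–Macaulay Λ-module M is isomorphic to a finite direct sum ⊕_{1 ≤ i < j ≤ n} (i,j)^{l_{ij}} for some non-negative integers l_{ij}, and the multiplicities l_{ij} are uniquely determined by the isomorphism class of M. -/

import Mathlib

set_option synthInstance.maxHeartbeats 1000000
set_option maxHeartbeats 1000000

open Polynomial Matrix

noncomputable section

/-- The exponent `c_{ij}` (with 0-based indices `i j : Fin n`, corresponding to the 1-based
`c_{i+1,j+1} = δ_{i+1>j+1} + δ_{i+1>j+2} − δ_{(i+1,j+1)=(1,n)}`). -/
def cExp (n : ℕ) (i j : Fin n) : ℤ :=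
  (if (j : ℕ) < (i : ℕ) then 1 else 0) + (if (j : ℕ) + 1 < (i : ℕ) then 1 else 0)
    - (if (i : ℕ) = 0 ∧ (j : ℕ) = n - 1 then 1 else 0)

/-- The subset `x^c · K[x]` of `K(x)`. -/
def xPow (K : Type*) [Field K] (c : ℤ) : Set (RatFunc K) :=
  {f | ∃ p : Polynomial K, f = RatFunc.X ^ c * algebraMap (Polynomial K) (RatFunc K) p}

/-- The carrier set of the tiled order `Λ ⊆ M_n(K(x))`:
matrices whose `(i,j)` entry lies in `x^{c_{ij}}·K[x]`. -/
def lambdaCarrier (K : Type*) [Field K] (n : ℕ) : Set (Matrix (Fin n) (Fin n) (RatFunc K)) :=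
  {M | ∀ i j, M i j ∈ xPow K (cExp n i j)}

/-- Exponent pattern of the module `(i,j)` (1-based `i j`; `k : ℕ` is a 0-based coordinate,
so the 1-based coordinate is `k+1`): `0` for `k+1 ≤ i`, `1` for `i < k+1 ≤ j`, `2` otherwise. -/
def dExp (i j k : ℕ) : ℤ := if k + 1 ≤ i then 0 else if k + 1 ≤ j then 1 else 2

/-- The carrier set of the `Λ`-module `(i,j)` inside the column space `K(x)^n`. -/
def ijSet (K : Type*) [Field K] (n : ℕ) (i j : ℕ) : Set (Fin n → RatFunc K) :=
  {v | ∀ k : Fin n, v k ∈ xPow K (dExp i j (k : ℕ))}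

/-- Column vectors form a module over the matrix ring via `mulVec`. -/
instance matVecModule (K : Type*) [Field K] (n : ℕ) :
    Module (Matrix (Fin n) (Fin n) (RatFunc K)) (Fin n → RatFunc K) where
  smul M v := M.mulVec v
  one_smul v := Matrix.one_mulVec v
  mul_smul M N v := (Matrix.mulVec_mulVec v M N).symm
  smul_zero M := Matrix.mulVec_zero M
  smul_add M u v := Matrix.mulVec_add M u v
  add_smul M N v := Matrix.add_mulVec M N v
  zero_smul v := Matrix.zero_mulVec v

open DirectSum

universe u

/-- The exponent pattern of the module `(a + 1, b + 1)` in `0`-based coordinates. -/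
def level (a b k : ℕ) : ℕ := if k ≤ a then 0 else if k ≤ b then 1 else 2

section AdaptedBasis

variable {K : Type*} [Field K] {L : Type*} [AddCommGroup L] [Module K[X] L]
  {ι : Type*} [Fintype ι] {r : ℕ}

lemma span_range_update_eq_top [DecidableEq ι] (v : Module.Basis ι K[X] L) (t : ι) (w : L)
    (hw : IsUnit (v.repr w t)) :
    Submodule.span K[X] (Set.range (Function.update v t w)) = ⊤ := by
  set S := Submodule.span K[X] (Set.range (Function.update v t w))
  have hmem : ∀ s, Function.update v t w s ∈ S := fun s => Submodule.subset_span ⟨s, rfl⟩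
  have hne : ∀ s, s ≠ t → v s ∈ S := fun s hs => by
    simpa [Function.update_of_ne hs] using hmem s
  have hwS : w ∈ S := by simpa using hmem t
  have hsum : v.repr w t • v t = w - ∑ s ∈ Finset.univ.erase t, v.repr w s • v s := by
    rw [eq_sub_iff_add_eq,
      Finset.add_sum_erase _ (fun s => v.repr w s • v s) (Finset.mem_univ t), v.sum_repr]
  have ht : v t ∈ S := by
    rw [← Submodule.smul_mem_iff_of_isUnit S hw, hsum]
    exact S.sub_mem hwS (S.sum_mem fun s hs => S.smul_mem _ (hne s (Finset.ne_of_mem_erase hs)))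
  rw [eq_top_iff, ← v.span_eq, Submodule.span_le]
  rintro _ ⟨s, rfl⟩
  by_cases hs : s = t
  · exact hs ▸ ht
  · exact hne s hs

lemma exists_basis_of_span_eq_top (v : Module.Basis ι K[X] L) (u : ι → L)
    (hu : Submodule.span K[X] (Set.range u) = ⊤) :
    ∃ v' : Module.Basis ι K[X] L, ⇑v' = u := by
  have : Module.Finite K[X] L := Module.Finite.of_basis v
  have hs : Function.Surjective (v.constr K[X] u : L →ₗ[K[X]] L) := by
    rw [← LinearMap.range_eq_top, v.constr_range, hu]
  have hi := OrzechProperty.injective_of_surjective_endomorphism _ hs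
  refine ⟨v.map (LinearEquiv.ofBijective _ ⟨hi, hs⟩), ?_⟩
  funext t
  rw [v.map_apply]
  exact v.constr_basis K[X] u t

/-- A basis of maximal total level cannot be improved by replacing one of its vectors. -/
lemma exists_maximal_basis (v₀ : Module.Basis ι K[X] L) (N : Fin (r + 1) → Submodule K[X] L)
    (h0 : N 0 = ⊤) :
    ∃ (v : Module.Basis ι K[X] L) (a b : ι → Fin (r + 1)),
      (∀ t, v t ∈ N (a t)) ∧ (∀ t, (X : K[X]) • v t ∈ N (b t)) ∧
      ∀ (t : ι) (w : L) (i j : Fin (r + 1)), w ∈ N i → (X : K[X]) • w ∈ N j →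
        IsUnit (v.repr w t) → (i : ℕ) + j ≤ a t + b t := by
  classical
  let S : Set ((ι → Fin (r + 1)) × (ι → Fin (r + 1))) :=
    {p | ∃ v : Module.Basis ι K[X] L,
      (∀ t, v t ∈ N (p.1 t)) ∧ ∀ t, (X : K[X]) • v t ∈ N (p.2 t)}
  have hS : S.Nonempty := ⟨(fun _ => 0, fun _ => 0), v₀, by simp [h0], by simp [h0]⟩
  obtain ⟨⟨a, b⟩, ⟨v, hva, hvb⟩, hmax⟩ := Set.exists_max_image S
    (fun p => ∑ t, ((p.1 t : ℕ) + (p.2 t : ℕ))) S.toFinite hS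
  refine ⟨v, a, b, hva, hvb, fun t w i j hi hj hw => ?_⟩
  obtain ⟨v', hv'⟩ := exists_basis_of_span_eq_top v _ (span_range_update_eq_top v t w hw)
  have hle := hmax (Function.update a t i, Function.update b t j) ⟨v', fun s => ?_, fun s => ?_⟩
  · dsimp only at hle
    rw [← Finset.add_sum_erase _ _ (Finset.mem_univ t),
      ← Finset.add_sum_erase Finset.univ (fun t => ((a t : ℕ) + (b t : ℕ))) (Finset.mem_univ t),
      Finset.sum_congr rfl (g := fun s => ((a s : ℕ) + (b s : ℕ))) (fun s hs => by
        simp [Function.update_of_ne (Finset.ne_of_mem_erase hs)])] at hle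
    simpa using hle
  · rw [hv']
    by_cases hs : s = t
    · subst hs; simpa using hi
    · simpa [Function.update_of_ne hs] using hva s
  · rw [hv']
    by_cases hs : s = t
    · subst hs; simpa using hj
    · simpa [Function.update_of_ne hs] using hvb s

theorem exists_adapted_basis (v₀ : Module.Basis ι K[X] L) (N : Fin (r + 1) → Submodule K[X] L)
    (hN : Antitone N) (h0 : N 0 = ⊤)
    (hsucc : ∀ (k : Fin r) (w : L), w ∈ N k.castSucc → (X : K[X]) • w ∈ N k.succ)
    (hsq : ∀ w : L, (X ^ 2 : K[X]) • w ∈ N (Fin.last r))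
    (hlast : ∀ w ∈ N (Fin.last r), ∃ u : L, w = (X : K[X]) • u) :
    ∃ (v : Module.Basis ι K[X] L) (a b : ι → Fin (r + 1)), (∀ t, a t < b t) ∧
      ∀ (k : Fin (r + 1)) (w : L),
        w ∈ N k ↔ ∀ t, (X : K[X]) ^ level (a t) (b t) k ∣ v.repr w t := by
  classical
  obtain ⟨v, a, b, hva, hvb, hmax⟩ := exists_maximal_basis v₀ N h0
  have hsq' : ∀ (k : Fin (r + 1)) (p : K[X]) (w : L), X ^ 2 ∣ p → p • w ∈ N k := by
    rintro k _ w ⟨q, rfl⟩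
    rw [mul_smul]
    exact hN (Fin.le_last k) (hsq _)
  have hX : ∀ (k : Fin (r + 1)) (p : K[X]) (t : ι), X ∣ p → k ≤ b t → p • v t ∈ N k := by
    rintro k _ t ⟨q, rfl⟩ hk
    rw [mul_comm, mul_smul]
    exact (N k).smul_mem _ (hN hk (hvb t))
  have hone : ∀ (k : Fin (r + 1)) (p : K[X]) (t : ι), k ≤ a t → p • v t ∈ N k :=
    fun k p t hk => (N k).smul_mem _ (hN hk (hva t))
  have hab : ∀ t, a t < b t := by
    intro t
    rcases Fin.eq_castSucc_or_eq_last (a t) with ⟨k, hk⟩ | hk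
    · have h1 := hsucc k (v t) (hk ▸ hva t)
      have h2 := hmax t (v t) (a t) k.succ (hva t) h1 (by simp)
      have h3 : (a t : ℕ) = k := by rw [hk]; rfl
      rw [Fin.lt_def]
      simp only [Fin.val_succ] at h2
      omega
    · obtain ⟨u, hu⟩ := hlast (v t) (hk ▸ hva t)
      have h1 : v.repr (v t) t = X * v.repr u t := by
        conv_lhs => rw [hu]
        simp
      have h2 : IsUnit (X : K[X]) := by
        apply IsUnit.of_mul_eq_one (v.repr u t)
        rw [← h1]; simp
      exact absurd h2 not_isUnit_X
  have X_dvd_of_lt : ∀ (k : Fin (r + 1)) (w : L), w ∈ N k → ∀ t, a t < k → X ∣ v.repr w t := by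
    intro k w hw
    by_contra! hcon
    obtain ⟨t₀', ht₀'⟩ := hcon
    obtain ⟨t₀, ht₀, hmin⟩ := Finset.exists_min_image
      (Finset.univ.filter fun t => a t < k ∧ ¬ X ∣ v.repr w t) b ⟨t₀', by simpa using ht₀'⟩
    simp only [Finset.mem_filter, Finset.mem_univ, true_and] at ht₀ hmin
    set c := (v.repr w t₀).coeff 0 with hc
    set d := (v.repr w t₀).divX with hd
    have hp : v.repr w t₀ = X * d + C c := (X_mul_divX_add _).symm
    have hc0 : c ≠ 0 := fun h => ht₀.2 (X_dvd_iff.2 h)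
    set q : ι → K[X] := fun t => if t = t₀ then C (c ^ 2) else
      if a t < k then (C c - X * d) * v.repr w t else 0 with hq
    have hrepr : ∀ t, v.repr (∑ s, q s • v s) t = q t := fun t => by
      rw [v.repr_sum_self]
    have hdiff : ∀ t, (q t - (C c - X * d) * v.repr w t) • v t ∈ N k := by
      intro t
      by_cases ht : t = t₀
      · apply hsq'
        subst ht
        simp only [hq, if_true]
        rw [hp]
        exact ⟨d ^ 2, by simp only [C_pow]; ring⟩
      · by_cases hk : a t < k
        · simp [hq, ht, hk]
        · exact hone _ _ _ (not_lt.1 hk)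
    have hmem : (∑ s, q s • v s) ∈ N k := by
      have : (∑ s, q s • v s) = (∑ s, (q s - (C c - X * d) * v.repr w s) • v s)
          + (C c - X * d) • w := by
        conv_rhs => rw [← v.sum_repr w, Finset.smul_sum, ← Finset.sum_add_distrib]
        refine Finset.sum_congr rfl fun s _ => ?_
        rw [v.sum_repr, sub_smul, mul_smul, sub_add_cancel]
      rw [this]
      exact (N k).add_mem ((N k).sum_mem fun s _ => hdiff s) ((N k).smul_mem _ hw)
    have hmem' : (X : K[X]) • (∑ s, q s • v s) ∈ N (b t₀) := by
      rw [Finset.smul_sum]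
      refine (N _).sum_mem fun s _ => ?_
      rw [← mul_smul]
      by_cases hs : s = t₀
      · subst hs
        exact hX _ _ _ (Dvd.intro _ rfl) le_rfl
      · by_cases hk : a s < k
        · by_cases hdv : X ∣ v.repr w s
          · apply hsq'
            simp only [hq, hs, hk, if_true, if_false]
            rw [pow_two]
            exact mul_dvd_mul_left _ (hdv.mul_left _)
          · exact hX _ _ _ (Dvd.intro _ rfl) (hmin s ⟨hk, hdv⟩)
        · simp [hq, hs, hk]
    have := hmax t₀ _ k (b t₀) hmem hmem' (by
      rw [hrepr]
      simp only [hq, if_true]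
      exact isUnit_C.2 (IsUnit.mk0 _ (pow_ne_zero _ hc0)))
    have h2 := ht₀.1
    rw [Fin.lt_def] at h2
    omega
  have X_sq_dvd_of_lt : ∀ (k : Fin (r + 1)) (w : L), w ∈ N k →
      ∀ t, b t < k → X ^ 2 ∣ v.repr w t := by
    intro k w hw
    by_contra! hcon
    obtain ⟨t₀', ht₀'⟩ := hcon
    have hdvd : ∀ t, b t < k → X ^ 2 ∣ v.repr w t - X * C ((v.repr w t).coeff 1) := by
      intro t ht
      have h0 := X_dvd_iff.1 (X_dvd_of_lt k w hw t ((hab t).trans ht))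
      rw [X_pow_dvd_iff]
      intro i hi
      interval_cases i <;> simp [h0]
    have hiff : ∀ t, b t < k → ¬ X ^ 2 ∣ v.repr w t → (v.repr w t).coeff 1 ≠ 0 := by
      intro t ht h h0
      have := hdvd t ht
      rw [h0] at this
      exact h (by simpa using this)
    obtain ⟨t₀, ht₀, hmin⟩ := Finset.exists_min_image
      (Finset.univ.filter fun t => b t < k ∧ (v.repr w t).coeff 1 ≠ 0) a
        ⟨t₀', by simpa using ⟨ht₀'.1, hiff _ ht₀'.1 ht₀'.2⟩⟩
    simp only [Finset.mem_filter, Finset.mem_univ, true_and] at ht₀ hmin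
    set q : ι → K[X] := fun t => if b t < k then C ((v.repr w t).coeff 1) else 0 with hq
    have hrepr : ∀ t, v.repr (∑ s, q s • v s) t = q t := fun t => by
      rw [v.repr_sum_self]
    have hmem : (∑ s, q s • v s) ∈ N (a t₀) := by
      refine (N _).sum_mem fun s _ => ?_
      by_cases hk : b s < k
      · by_cases hs : (v.repr w s).coeff 1 = 0
        · simp [hq, hs]
        · exact hone _ _ _ (hmin s ⟨hk, hs⟩)
      · simp [hq, hk]
    have hmem' : (X : K[X]) • (∑ s, q s • v s) ∈ N k := by
      have : (X : K[X]) • (∑ s, q s • v s) = w - ∑ s, (v.repr w s - X * q s) • v s := by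
        conv_rhs => rw [← v.sum_repr w, ← Finset.sum_sub_distrib]
        rw [Finset.smul_sum]
        refine Finset.sum_congr rfl fun s _ => ?_
        rw [v.sum_repr, sub_smul, mul_smul, sub_sub_cancel]
      rw [this]
      refine (N k).sub_mem hw ((N k).sum_mem fun s _ => ?_)
      by_cases hk : b s < k
      · apply hsq'
        simpa only [hq, hk, if_true] using hdvd s hk
      · by_cases hk' : a s < k
        · apply hX _ _ _ _ (not_lt.1 hk)
          simpa [hq, hk] using X_dvd_of_lt k w hw s hk'
        · exact hone _ _ _ (not_lt.1 hk')
    have := hmax t₀ _ (a t₀) k hmem hmem' (by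
      rw [hrepr]
      simp only [hq, ht₀.1, if_true]
      exact isUnit_C.2 (IsUnit.mk0 _ ht₀.2))
    have h2 := ht₀.1
    rw [Fin.lt_def] at h2
    omega
  refine ⟨v, a, b, hab, fun k w => ⟨fun hw t => ?_, fun h => ?_⟩⟩
  · unfold level
    split_ifs with h1 h2
    · simp
    · simpa using X_dvd_of_lt k w hw t (Fin.lt_def.2 (not_le.1 h1))
    · exact X_sq_dvd_of_lt k w hw t (Fin.lt_def.2 (not_le.1 h2))
  · rw [← v.sum_repr w]
    refine (N k).sum_mem fun t _ => ?_
    have ht := h t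
    unfold level at ht
    split_ifs at ht with h1 h2
    · exact hone _ _ _ h1
    · exact hX _ _ _ (by simpa using ht) h2
    · exact hsq' _ _ _ ht

end AdaptedBasis

section Counting

lemma submatrix_fiber_mul_submatrix_fiber {R T S α : Type*} [Semiring R] [Fintype S]
    [DecidableEq T] [DecidableEq α] [PartialOrder α] (f : T → α) (g : S → α)
    (P : Matrix T S R) (Q : Matrix S T R) (hPQ : P * Q = 1)
    (hP : ∀ t s, P t s ≠ 0 → f t ≤ g s) (hQ : ∀ s t, Q s t ≠ 0 → g s ≤ f t) (p : α) :
    P.submatrix (Subtype.val : {t // f t = p} → T) (Subtype.val : {s // g s = p} → S) *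
      Q.submatrix (Subtype.val : {s // g s = p} → S) (Subtype.val : {t // f t = p} → T) = 1 := by
  ext t t'
  have h : (P * Q) t t' = (1 : Matrix T T R) t t' := by rw [hPQ]
  rw [Matrix.mul_apply] at h ⊢
  simp only [Matrix.submatrix_apply]
  rw [← Finset.sum_subtype (Finset.univ.filter fun s => g s = p) (by simp)
    (fun s => P t s * Q s t'), Finset.sum_filter_of_ne, h]
  · simp [Matrix.one_apply, Subtype.ext_iff]
  · intro s _ hs
    refine le_antisymm ?_ ?_
    · exact t'.2 ▸ hQ s t' (right_ne_zero_of_mul hs)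
    · exact t.2 ▸ hP t s (left_ne_zero_of_mul hs)

lemma card_fiber_eq_of_triangular {K T S α : Type*} [Field K] [Fintype T] [Fintype S]
    [DecidableEq T] [DecidableEq S] [PartialOrder α] [DecidableEq α] (f : T → α) (g : S → α)
    (P : Matrix T S K) (Q : Matrix S T K) (hPQ : P * Q = 1) (hQP : Q * P = 1)
    (hP : ∀ t s, P t s ≠ 0 → f t ≤ g s) (hQ : ∀ s t, Q s t ≠ 0 → g s ≤ f t) (p : α) :
    Fintype.card {t // f t = p} = Fintype.card {s // g s = p} := by
  simpa using (Matrix.toLin'OfInv (submatrix_fiber_mul_submatrix_fiber f g P Q hPQ hP hQ p)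
    (submatrix_fiber_mul_submatrix_fiber g f Q P hQP hQ hP p)).finrank_eq

end Counting

section Order

variable {K : Type*} [Field K] {r : ℕ}

lemma X_zpow_mem_xPow {c : ℤ} {d : ℤ} (h : c ≤ d) : (RatFunc.X ^ d : RatFunc K) ∈ xPow K c := by
  obtain ⟨e, rfl⟩ := Int.le.dest h
  exact ⟨X ^ e, by rw [zpow_add₀ RatFunc.X_ne_zero]; simp⟩

lemma exists_of_mem_xPow {c : ℤ} {d : ℕ} (h : 0 ≤ d + c) {f : RatFunc K} (hf : f ∈ xPow K c) :
    ∃ q : K[X], algebraMap K[X] (RatFunc K) q = RatFunc.X ^ d * f := by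
  obtain ⟨p, rfl⟩ := hf
  obtain ⟨e, he⟩ := Int.eq_ofNat_of_zero_le h
  refine ⟨X ^ e * p, ?_⟩
  rw [← mul_assoc, ← zpow_natCast, ← zpow_add₀ RatFunc.X_ne_zero, he]
  simp

lemma mem_xPow_natCast {d : ℕ} {f : RatFunc K} :
    f ∈ xPow K d ↔ ∃ q : K[X], X ^ d ∣ q ∧ f = algebraMap K[X] (RatFunc K) q := by
  constructor
  · rintro ⟨p, rfl⟩
    exact ⟨X ^ d * p, Dvd.intro _ rfl, by simp⟩
  · rintro ⟨_, ⟨p, rfl⟩, rfl⟩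
    exact ⟨p, by simp⟩

lemma dExp_eq_level (a b k : ℕ) : dExp (a + 1) (b + 1) k = (level a b k : ℤ) := by
  unfold dExp level
  split_ifs <;> first | rfl | omega

variable {Λ : Subalgebra K[X] (Matrix (Fin (r + 1)) (Fin (r + 1)) (RatFunc K))}

lemma single_mem_of_mem_xPow (hΛ : (Λ : Set (Matrix _ _ (RatFunc K))) = lambdaCarrier K (r + 1))
    {i j : Fin (r + 1)} {f : RatFunc K} (hf : f ∈ xPow K (cExp (r + 1) i j)) :
    Matrix.single i j f ∈ Λ := by
  rw [← SetLike.mem_coe, hΛ]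
  intro i' j'
  rw [Matrix.single_apply]
  split_ifs with h
  · rwa [← h.1, ← h.2]
  · exact ⟨0, by simp⟩

lemma coe_smul_apply (x : Λ) (v : Fin (r + 1) → RatFunc K) (k : Fin (r + 1)) :
    (x • v) k = ∑ j, (x : Matrix _ _ (RatFunc K)) k j * v j := rfl


/-- The matrix unit `x ^ d • e_{ij}`, as an element of `Λ`. -/
def matrixUnit (hΛ : (Λ : Set (Matrix _ _ (RatFunc K))) = lambdaCarrier K (r + 1))
    (i j : Fin (r + 1)) (d : ℤ) (h : cExp (r + 1) i j ≤ d) : Λ :=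
  ⟨Matrix.single i j (RatFunc.X ^ d), single_mem_of_mem_xPow hΛ (X_zpow_mem_xPow h)⟩

lemma cExp_zero_le (k : Fin (r + 1)) : cExp (r + 1) 0 k ≤ 0 := by
  simp [cExp]; split_ifs <;> omega

lemma cExp_nonpos_of_le {i j : Fin (r + 1)} (h : i ≤ j) : cExp (r + 1) i j ≤ 0 := by
  rw [Fin.le_def] at h
  simp only [cExp]; split_ifs <;> omega

lemma cExp_succ_castSucc_le (k : Fin r) : cExp (r + 1) k.succ k.castSucc ≤ 1 := by
  simp [cExp]

lemma cExp_le_two (i j : Fin (r + 1)) : cExp (r + 1) i j ≤ 2 := by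
  simp only [cExp]; split_ifs <;> omega

lemma neg_one_le_cExp (i j : Fin (r + 1)) : -1 ≤ cExp (r + 1) i j := by
  simp only [cExp]; split_ifs <;> omega

lemma cExp_zero_last_le : cExp (r + 1) 0 (Fin.last r) ≤ -1 := by
  simp [cExp]

variable (hΛ : (Λ : Set (Matrix _ _ (RatFunc K))) = lambdaCarrier K (r + 1))

lemma coe_polynomial_smul_apply (p : K[X]) (x : Λ) (i j : Fin (r + 1)) :
    ((p • x : Λ) : Matrix _ _ (RatFunc K)) i j =
      algebraMap K[X] (RatFunc K) p * (x : Matrix _ _ (RatFunc K)) i j := by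
  rw [← Algebra.smul_def]; rfl

lemma matrixUnit_mul {i j k : Fin (r + 1)} {d e f : ℤ} (h : cExp (r + 1) i j ≤ d)
    (h' : cExp (r + 1) j k ≤ e) (h'' : cExp (r + 1) i k ≤ f) (hf : d + e = f) :
    matrixUnit hΛ i j d h * matrixUnit hΛ j k e h' = matrixUnit hΛ i k f h'' := by
  subst hf
  apply Subtype.ext
  simp only [matrixUnit, MulMemClass.mk_mul_mk, Matrix.single_mul_single_same]
  rw [zpow_add₀ RatFunc.X_ne_zero]

lemma X_pow_smul_matrixUnit {i j : Fin (r + 1)} {d e : ℤ} (m : ℕ) (h : cExp (r + 1) i j ≤ d)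
    (h' : cExp (r + 1) i j ≤ e) (he : d + m = e) :
    (X ^ m : K[X]) • matrixUnit hΛ i j d h = matrixUnit hΛ i j e h' := by
  subst he
  apply Subtype.ext
  ext i' j'
  rw [coe_polynomial_smul_apply]
  simp only [matrixUnit, Matrix.single_apply, mul_ite, mul_zero]
  rw [zpow_add₀ RatFunc.X_ne_zero]
  simp [mul_comm]

lemma X_sq_smul_one_eq_sum :
    (X ^ 2 : K[X]) • (1 : Λ) = ∑ k, matrixUnit hΛ k 0 2 (cExp_le_two _ _) *
      matrixUnit hΛ 0 k 0 (cExp_zero_le k) := by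
  apply Subtype.ext
  ext i j
  rw [coe_polynomial_smul_apply]
  simp [matrixUnit, Matrix.sum_apply, Matrix.single_apply, Matrix.one_apply, ite_and]

lemma exists_X_smul_matrixUnit_mul (k : Fin (r + 1)) (x : Λ) :
    ∃ q : Fin (r + 1) → K[X],
      (∀ j, algebraMap K[X] (RatFunc K) (q j) = RatFunc.X * (x : Matrix _ _ (RatFunc K)) k j) ∧
      (X : K[X]) • (matrixUnit hΛ 0 k 0 (cExp_zero_le k) * x) =
        ∑ j, q j • matrixUnit hΛ 0 j 0 (cExp_zero_le j) := by
  have hx : ∀ i j, (x : Matrix _ _ (RatFunc K)) i j ∈ xPow K (cExp (r + 1) i j) := by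
    have := x.2
    rwa [← SetLike.mem_coe, hΛ] at this
  choose q hq using fun j => exists_of_mem_xPow (d := 1)
    (by have := neg_one_le_cExp k j; push_cast; omega) (hx k j)
  simp only [pow_one] at hq
  refine ⟨q, hq, ?_⟩
  apply Subtype.ext
  ext i j
  rw [coe_polynomial_smul_apply, AddSubmonoidClass.coe_finsetSum, Matrix.sum_apply]
  simp only [coe_polynomial_smul_apply, hq]
  simp [matrixUnit, Matrix.mul_apply, Matrix.single_apply, ite_and]

end Order

section Existence

variable {K : Type*} [Field K] {r : ℕ}
  {Λ : Subalgebra K[X] (Matrix (Fin (r + 1)) (Fin (r + 1)) (RatFunc K))}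
  {E : ℕ → ℕ → Submodule Λ (Fin (r + 1) → RatFunc K)}

lemma mem_iff_level_dvd
    (hE : ∀ i j : ℕ, 1 ≤ i → i < j → j ≤ r + 1 →
      (E i j : Set (Fin (r + 1) → RatFunc K)) = ijSet K (r + 1) i j)
    {a b : Fin (r + 1)} (hab : a < b) (v : Fin (r + 1) → RatFunc K) :
    v ∈ E (a + 1) (b + 1) ↔ ∀ k : Fin (r + 1), ∃ q : K[X],
      X ^ level a b k ∣ q ∧ v k = algebraMap K[X] (RatFunc K) q := by
  have := hE (a + 1) (b + 1) (by omega) (by rw [Fin.lt_def] at hab; omega) (by omega)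
  rw [← SetLike.mem_coe, this]
  refine forall_congr' fun k => ?_
  rw [dExp_eq_level, mem_xPow_natCast]

variable {M : Type*} [AddCommGroup M] [Module Λ M] [Module K[X] M] [IsScalarTower K[X] Λ M]

lemma smul_smul_comm_polynomial (x : Λ) (p : K[X]) (m : M) : x • p • m = p • x • m := by
  have : SMulCommClass K[X] Λ M := IsScalarTower.to_smulCommClass
  exact (smul_comm p x m).symm

variable (M) in
/-- The action of an element of `Λ` as a `K[x]`-linear map. -/
def actionMap (x : Λ) : M →ₗ[K[X]] M where
  toFun m := x • m
  map_add' := smul_add x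
  map_smul' p m := smul_smul_comm_polynomial x p m

variable (hΛ : (Λ : Set (Matrix _ _ (RatFunc K))) = lambdaCarrier K (r + 1))

variable (M) in
/-- The first component `e₁₁ M` of a `Λ`-module, as a `K[x]`-module. -/
abbrev firstComponent : Submodule K[X] M :=
  LinearMap.range (actionMap M (matrixUnit hΛ 0 0 0 (cExp_zero_le 0)))

variable (M) in
/-- The map `e₁ₖ : M → e₁₁ M`. -/
def toFirstComponent (k : Fin (r + 1)) : M →ₗ[K[X]] firstComponent M hΛ :=
  (actionMap M (matrixUnit hΛ 0 k 0 (cExp_zero_le k))).codRestrict _ fun m => by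
    refine ⟨matrixUnit hΛ 0 k 0 (cExp_zero_le k) • m, ?_⟩
    simp only [actionMap, LinearMap.coe_mk, AddHom.coe_mk, ← mul_smul]
    rw [matrixUnit_mul hΛ _ _ (cExp_zero_le k) (by simp)]

lemma coe_toFirstComponent (k : Fin (r + 1)) (m : M) :
    (toFirstComponent M hΛ k m : M) = matrixUnit hΛ 0 k 0 (cExp_zero_le k) • m := rfl

lemma toFirstComponent_matrixUnit_smul (j k : Fin (r + 1)) (d : ℕ)
    (h : cExp (r + 1) k j ≤ d) (m : M) :
    toFirstComponent M hΛ k (matrixUnit hΛ k j d h • m) =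
      (X ^ d : K[X]) • toFirstComponent M hΛ j m := by
  apply Subtype.ext
  rw [Submodule.coe_smul, coe_toFirstComponent, coe_toFirstComponent, ← mul_smul, ← smul_assoc,
    matrixUnit_mul hΛ _ _ (e := d) (f := d) ((cExp_zero_le j).trans (by simp)) (by simp),
    X_pow_smul_matrixUnit hΛ (e := d) d _ ((cExp_zero_le j).trans (by simp)) (by simp)]

lemma toFirstComponent_matrixUnit_smul_of_ne {i j k : Fin (r + 1)} (hik : k ≠ i) (d : ℤ)
    (h : cExp (r + 1) i j ≤ d) (m : M) :
    toFirstComponent M hΛ k (matrixUnit hΛ i j d h • m) = 0 := by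
  apply Subtype.ext
  rw [coe_toFirstComponent, ← mul_smul]
  have : matrixUnit hΛ 0 k 0 (cExp_zero_le k) * matrixUnit hΛ i j d h = 0 :=
    Subtype.ext (by simp [matrixUnit, Matrix.single_mul_single_of_ne _ _ _ _ hik])
  rw [this, zero_smul]
  rfl

lemma exists_X_smul_toFirstComponent (k : Fin (r + 1)) (x : Λ) :
    ∃ q : Fin (r + 1) → K[X],
      (∀ j, algebraMap K[X] (RatFunc K) (q j) = RatFunc.X * (x : Matrix _ _ (RatFunc K)) k j) ∧
      ∀ m : M, (X : K[X]) • toFirstComponent M hΛ k (x • m) =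
        ∑ j, q j • toFirstComponent M hΛ j m := by
  obtain ⟨q, hq, h⟩ := exists_X_smul_matrixUnit_mul hΛ k x
  refine ⟨q, hq, fun m => Subtype.ext ?_⟩
  have := congrArg (· • m) h
  simpa [coe_toFirstComponent, Finset.sum_smul, mul_smul] using this

lemma exists_adapted_basis_firstComponent [Module.Finite K[X] M] [Module.IsTorsionFree K[X] M] :
    ∃ (m : ℕ) (v : Module.Basis (Fin m) K[X] (firstComponent M hΛ)) (a b : Fin m → Fin (r + 1)),
      (∀ t, a t < b t) ∧ ∀ (k : Fin (r + 1)) (w : firstComponent M hΛ),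
        w ∈ LinearMap.range (toFirstComponent M hΛ k) ↔
          ∀ t, (X : K[X]) ^ level (a t) (b t) k ∣ v.repr w t := by
  refine ⟨_, exists_adapted_basis (Module.finBasis K[X] (firstComponent M hΛ))
    (fun k => LinearMap.range (toFirstComponent M hΛ k)) ?_ ?_ ?_ ?_ ?_⟩
  · rintro j k hjk _ ⟨m, rfl⟩
    exact ⟨matrixUnit hΛ j k 0 (cExp_nonpos_of_le hjk) • m, by
      simpa using toFirstComponent_matrixUnit_smul hΛ k j 0 (cExp_nonpos_of_le hjk) m⟩
  · rw [LinearMap.range_eq_top]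
    rintro ⟨_, m, rfl⟩
    exact ⟨m, rfl⟩
  · rintro k _ ⟨m, rfl⟩
    exact ⟨matrixUnit hΛ k.succ k.castSucc 1 (cExp_succ_castSucc_le k) • m, by
      simpa using toFirstComponent_matrixUnit_smul hΛ _ _ 1 (cExp_succ_castSucc_le k) m⟩
  · rintro ⟨_, m, rfl⟩
    exact ⟨matrixUnit hΛ (Fin.last r) 0 2 (cExp_le_two _ _) • m,
      toFirstComponent_matrixUnit_smul hΛ _ _ 2 (cExp_le_two _ _) m⟩
  · rintro _ ⟨m, rfl⟩
    refine ⟨toFirstComponent M hΛ 0 (matrixUnit hΛ 0 (Fin.last r) (-1) cExp_zero_last_le • m), ?_⟩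
    apply Subtype.ext
    rw [Submodule.coe_smul, coe_toFirstComponent, coe_toFirstComponent, ← mul_smul, ← smul_assoc,
      matrixUnit_mul hΛ _ _ (f := -1) cExp_zero_last_le (by simp), ← pow_one (X : K[X]),
      X_pow_smul_matrixUnit hΛ (e := 0) 1 _ (cExp_zero_le _) (by simp)]

theorem exists_linearEquiv_pi
    (hΛ : (Λ : Set (Matrix _ _ (RatFunc K))) = lambdaCarrier K (r + 1))
    [Module.Finite K[X] M] [Module.IsTorsionFree K[X] M]
    (hE : ∀ i j : ℕ, 1 ≤ i → i < j → j ≤ r + 1 →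
      (E i j : Set (Fin (r + 1) → RatFunc K)) = ijSet K (r + 1) i j) :
    ∃ (m : ℕ) (f : Fin m → Fin (r + 1) × Fin (r + 1)), (∀ t, (f t).1 < (f t).2) ∧
      Nonempty (M ≃ₗ[Λ] Π t, E ((f t).1 + 1) ((f t).2 + 1)) := by
  obtain ⟨m, v, a, b, hab, hv⟩ := exists_adapted_basis_firstComponent (M := M) hΛ
  let F : M →ₗ[Λ] Π t, E (a t + 1) (b t + 1) :=
    { toFun := fun w t => ⟨fun k => algebraMap K[X] (RatFunc K)
          (v.repr (toFirstComponent M hΛ k w) t),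
        (mem_iff_level_dvd hE (hab t) _).2 fun k => ⟨_, (hv k _).1 ⟨w, rfl⟩ t, rfl⟩⟩
      map_add' := fun w w' => by
        funext t
        apply Subtype.ext
        funext k
        simp
      map_smul' := fun x w => by
        funext t
        apply Subtype.ext
        funext k
        obtain ⟨q, hq, h⟩ := exists_X_smul_toFirstComponent (M := M) hΛ k x
        have hx := congrArg (fun u => algebraMap K[X] (RatFunc K) (v.repr u t)) (h w)
        apply mul_left_cancel₀ (RatFunc.X_ne_zero (K := K))
        rw [RingHom.id_apply, Pi.smul_apply, Submodule.coe_smul, coe_smul_apply, Finset.mul_sum]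
        simpa [hq, mul_assoc] using hx }
  refine ⟨m, fun t => (a t, b t), hab, ⟨LinearEquiv.ofBijective F ⟨?_, ?_⟩⟩⟩
  · rw [injective_iff_map_eq_zero]
    intro w hw
    have h0 : ∀ k, toFirstComponent M hΛ k w = 0 := by
      intro k
      apply v.ext_elem
      intro t
      have h1 := congrArg (fun u => (u t : Fin (r + 1) → RatFunc K) k) hw
      rw [map_zero, Finsupp.zero_apply]
      exact (map_eq_zero_iff _ (RatFunc.algebraMap_injective K)).1 (by simpa [F] using h1)
    have h2 : (X ^ 2 : K[X]) • w = 0 := by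
      rw [← one_smul Λ w, ← smul_assoc, X_sq_smul_one_eq_sum hΛ, Finset.sum_smul]
      refine Finset.sum_eq_zero fun k _ => ?_
      rw [mul_smul, ← coe_toFirstComponent, h0]
      simp
    exact (smul_eq_zero_iff_right (pow_ne_zero 2 X_ne_zero)).1 h2
  · intro u
    choose q hq hu using fun t => (mem_iff_level_dvd hE (hab t) _).1 (u t).2
    have hw : ∀ k, ∃ w, toFirstComponent M hΛ k w = ∑ t, q t k • v t := by
      intro k
      refine (hv k _).2 fun t => ?_
      rw [v.repr_sum_self]
      exact hq t k
    choose w hw using hw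
    refine ⟨∑ k, matrixUnit hΛ k k 0 (cExp_nonpos_of_le le_rfl) • w k, ?_⟩
    funext t
    apply Subtype.ext
    funext k
    rw [hu]
    change algebraMap K[X] (RatFunc K) (v.repr (toFirstComponent M hΛ k _) t) = _
    rw [map_sum, Finset.sum_eq_single k]
    · have := toFirstComponent_matrixUnit_smul hΛ k k 0 (cExp_nonpos_of_le le_rfl) (w k)
      simp only [Nat.cast_zero, pow_zero, one_smul] at this
      rw [this, hw, v.repr_sum_self]
    · intro j _ hj
      exact toFirstComponent_matrixUnit_smul_of_ne hΛ hj.symm _ _ _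
    · simp

end Existence

section Uniqueness

variable {K : Type*} [Field K] {r : ℕ}
  {Λ : Subalgebra K[X] (Matrix (Fin (r + 1)) (Fin (r + 1)) (RatFunc K))}
  {E : ℕ → ℕ → Submodule Λ (Fin (r + 1) → RatFunc K)}
  (hΛ : (Λ : Set (Matrix _ _ (RatFunc K))) = lambdaCarrier K (r + 1))

lemma single_X_pow_level_mem
    (hE : ∀ i j : ℕ, 1 ≤ i → i < j → j ≤ r + 1 →
      (E i j : Set (Fin (r + 1) → RatFunc K)) = ijSet K (r + 1) i j)
    {a b : Fin (r + 1)} (hab : a < b) (k : Fin (r + 1)) :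
    (Pi.single k (algebraMap K[X] (RatFunc K) (X ^ level a b k)) : Fin (r + 1) → RatFunc K) ∈
      E (a + 1) (b + 1) := by
  refine (mem_iff_level_dvd hE hab _).2 fun k' => ?_
  by_cases h : k' = k
  · subst h
    exact ⟨_, dvd_rfl, by simp⟩
  · exact ⟨0, dvd_zero _, by simp [h]⟩

lemma single_zero_one_mem
    (hE : ∀ i j : ℕ, 1 ≤ i → i < j → j ≤ r + 1 →
      (E i j : Set (Fin (r + 1) → RatFunc K)) = ijSet K (r + 1) i j)
    {a b : Fin (r + 1)} (hab : a < b) :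
    (Pi.single 0 1 : Fin (r + 1) → RatFunc K) ∈ E (a + 1) (b + 1) := by
  simpa [level] using single_X_pow_level_mem hE hab 0

lemma algebraMap_smul_apply (p : K[X]) (v : Fin (r + 1) → RatFunc K) (k : Fin (r + 1)) :
    (algebraMap K[X] Λ p • v) k = algebraMap K[X] (RatFunc K) p * v k := by
  rw [coe_smul_apply, Finset.sum_eq_single k]
  · simp [Matrix.algebraMap_matrix_apply]
  · intro j _ hj
    simp [Matrix.algebraMap_matrix_apply, hj.symm]
  · simp

lemma matrixUnit_smul_apply (k : Fin (r + 1)) (v : Fin (r + 1) → RatFunc K) (j : Fin (r + 1)) :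
    (matrixUnit hΛ 0 k 0 (cExp_zero_le k) • v) j = if j = 0 then v k else 0 := by
  rw [coe_smul_apply]
  simp [matrixUnit, Matrix.single_apply, ite_and, eq_comm]

/-- Every homomorphism between the modules `(i, j)` is multiplication by a polynomial. -/
lemma exists_polynomial_of_linearMap
    (hΛ : (Λ : Set (Matrix _ _ (RatFunc K))) = lambdaCarrier K (r + 1))
    (hE : ∀ i j : ℕ, 1 ≤ i → i < j → j ≤ r + 1 →
      (E i j : Set (Fin (r + 1) → RatFunc K)) = ijSet K (r + 1) i j)
    {a b a' b' : Fin (r + 1)} (hab : a < b) (hab' : a' < b')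
    (g : E (a + 1) (b + 1) →ₗ[Λ] E (a' + 1) (b' + 1)) :
    ∃ p : K[X], (∀ (w : E (a + 1) (b + 1)) (k : Fin (r + 1)),
        (g w : Fin (r + 1) → RatFunc K) k =
          (w : Fin (r + 1) → RatFunc K) k * algebraMap K[X] (RatFunc K) p) ∧
      (p.coeff 0 ≠ 0 → (a, b) ≤ (a', b')) := by
  let e : E (a + 1) (b + 1) := ⟨Pi.single 0 1, single_zero_one_mem hE hab⟩
  obtain ⟨p, -, hp⟩ := (mem_iff_level_dvd hE hab' _).1 (g e).2 0
  have hg : ∀ (w : E (a + 1) (b + 1)) (k : Fin (r + 1)),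
        (g w : Fin (r + 1) → RatFunc K) k =
          (w : Fin (r + 1) → RatFunc K) k * algebraMap K[X] (RatFunc K) p := by
    intro w k
    obtain ⟨q, -, hq⟩ := (mem_iff_level_dvd hE hab _).1 w.2 k
    have h1 : matrixUnit hΛ 0 k 0 (cExp_zero_le k) • w = algebraMap K[X] Λ q • e := by
      apply Subtype.ext
      funext j
      rw [Submodule.coe_smul, Submodule.coe_smul, matrixUnit_smul_apply, algebraMap_smul_apply, hq]
      simp [e, Pi.single_apply]
    have h2 := congrArg
      (fun u : E (a' + 1) (b' + 1) => (u : Fin (r + 1) → RatFunc K) 0) (congrArg g h1)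
    simp only [map_smul, Submodule.coe_smul] at h2
    rw [matrixUnit_smul_apply, algebraMap_smul_apply, hp] at h2
    rw [hq]
    simpa using h2
  refine ⟨p, hg, fun hp0 => ?_⟩
  have hle : ∀ k : Fin (r + 1), level a' b' k ≤ level a b k := by
    intro k
    obtain ⟨q, hdvd, hq⟩ := (mem_iff_level_dvd hE hab' _).1
      (g ⟨_, single_X_pow_level_mem hE hab k⟩).2 k
    rw [hg, Subtype.coe_mk, Pi.single_eq_same, ← map_mul] at hq
    rw [← RatFunc.algebraMap_injective K hq] at hdvd
    have hnd : ¬ X ∣ p := fun h => hp0 (X_dvd_iff.1 h)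
    exact (pow_dvd_pow_iff X_ne_zero not_isUnit_X).1
      ((prime_X.coprime_iff_not_dvd.2 hnd).pow_left.dvd_of_dvd_mul_right hdvd)
  have h1 := hle a
  have h2 := hle b
  rw [Fin.lt_def] at hab hab'
  simp only [Prod.mk_le_mk, Fin.le_def]
  unfold level at h1 h2
  split_ifs at h1 h2 <;> omega

lemma exists_matrix_of_linearMap
    (hΛ : (Λ : Set (Matrix _ _ (RatFunc K))) = lambdaCarrier K (r + 1))
    (hE : ∀ i j : ℕ, 1 ≤ i → i < j → j ≤ r + 1 →
      (E i j : Set (Fin (r + 1) → RatFunc K)) = ijSet K (r + 1) i j)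
    {T S : Type*} [Fintype T] [DecidableEq T]
    {f : T → Fin (r + 1) × Fin (r + 1)} {g : S → Fin (r + 1) × Fin (r + 1)}
    (hf : ∀ t, (f t).1 < (f t).2) (hg : ∀ s, (g s).1 < (g s).2)
    (φ : (Π t, E ((f t).1 + 1) ((f t).2 + 1)) →ₗ[Λ] Π s, E ((g s).1 + 1) ((g s).2 + 1)) :
    ∃ P : Matrix T S K[X], (∀ w s k, (φ w s : Fin (r + 1) → RatFunc K) k =
        ∑ t, (w t : Fin (r + 1) → RatFunc K) k * algebraMap K[X] (RatFunc K) (P t s)) ∧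
      ∀ t s, (P t s).coeff 0 ≠ 0 → f t ≤ g s := by
  choose P hP hP' using fun t s => exists_polynomial_of_linearMap hΛ hE (hf t) (hg s)
    (LinearMap.proj s ∘ₗ φ ∘ₗ LinearMap.single Λ (fun t => E ((f t).1 + 1) ((f t).2 + 1)) t)
  refine ⟨P, fun w s k => ?_, hP'⟩
  conv_lhs => rw [← Finset.univ_sum_single w]
  simp only [← hP]
  simp

lemma matrix_mul_eq_one
    (hE : ∀ i j : ℕ, 1 ≤ i → i < j → j ≤ r + 1 →
      (E i j : Set (Fin (r + 1) → RatFunc K)) = ijSet K (r + 1) i j)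
    {T S : Type*} [Fintype T] [DecidableEq T] [Fintype S]
    {f : T → Fin (r + 1) × Fin (r + 1)} {g : S → Fin (r + 1) × Fin (r + 1)}
    (hf : ∀ t, (f t).1 < (f t).2)
    {φ : (Π t, E ((f t).1 + 1) ((f t).2 + 1)) → Π s, E ((g s).1 + 1) ((g s).2 + 1)}
    {ψ : (Π s, E ((g s).1 + 1) ((g s).2 + 1)) → Π t, E ((f t).1 + 1) ((f t).2 + 1)}
    (h : ∀ w, ψ (φ w) = w) {P : Matrix T S K[X]} {Q : Matrix S T K[X]}
    (hP : ∀ w s k, (φ w s : Fin (r + 1) → RatFunc K) k =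
        ∑ t, (w t : Fin (r + 1) → RatFunc K) k * algebraMap K[X] (RatFunc K) (P t s))
    (hQ : ∀ w t k, (ψ w t : Fin (r + 1) → RatFunc K) k =
        ∑ s, (w s : Fin (r + 1) → RatFunc K) k * algebraMap K[X] (RatFunc K) (Q s t)) :
    P * Q = 1 := by
  ext1 t t'
  have h1 := congrArg (fun u => (u t' : Fin (r + 1) → RatFunc K) 0)
    (h (Pi.single t ⟨Pi.single 0 1, single_zero_one_mem hE (hf t)⟩))
  have h2 : ∀ t'', ((Pi.single t ⟨Pi.single 0 1, single_zero_one_mem hE (hf t)⟩ :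
      Π t, E ((f t).1 + 1) ((f t).2 + 1)) t'' : Fin (r + 1) → RatFunc K) 0 =
      if t = t'' then 1 else 0 := by
    intro t''
    by_cases ht : t = t''
    · subst ht; simp
    · simp [ht]
  simp only [hQ, hP, h2] at h1
  apply RatFunc.algebraMap_injective K
  rw [Matrix.mul_apply, Matrix.one_apply]
  simpa [apply_ite] using h1

theorem card_fiber_eq_of_linearEquiv
    (hΛ : (Λ : Set (Matrix _ _ (RatFunc K))) = lambdaCarrier K (r + 1))
    (hE : ∀ i j : ℕ, 1 ≤ i → i < j → j ≤ r + 1 →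
      (E i j : Set (Fin (r + 1) → RatFunc K)) = ijSet K (r + 1) i j)
    {T S : Type*} [Fintype T] [Fintype S]
    {f : T → Fin (r + 1) × Fin (r + 1)} {g : S → Fin (r + 1) × Fin (r + 1)}
    (hf : ∀ t, (f t).1 < (f t).2) (hg : ∀ s, (g s).1 < (g s).2)
    (φ : (Π t, E ((f t).1 + 1) ((f t).2 + 1)) ≃ₗ[Λ] Π s, E ((g s).1 + 1) ((g s).2 + 1))
    (p : Fin (r + 1) × Fin (r + 1)) :
    Fintype.card {t // f t = p} = Fintype.card {s // g s = p} := by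
  classical
  obtain ⟨P, hP, hP'⟩ := exists_matrix_of_linearMap hΛ hE hf hg φ.toLinearMap
  obtain ⟨Q, hQ, hQ'⟩ := exists_matrix_of_linearMap hΛ hE hg hf φ.symm.toLinearMap
  have hPQ := matrix_mul_eq_one hE hf φ.symm_apply_apply hP hQ
  have hQP := matrix_mul_eq_one hE hg φ.apply_symm_apply hQ hP
  refine card_fiber_eq_of_triangular f g (P.map constantCoeff) (Q.map constantCoeff) ?_ ?_
    (fun t s h => hP' t s (by simpa using h)) (fun s t h => hQ' s t (by simpa using h)) p
  · rw [← Matrix.map_mul, hPQ, Matrix.map_one _ (map_zero _) (map_one _)]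
  · rw [← Matrix.map_mul, hQP, Matrix.map_one _ (map_zero _) (map_one _)]

end Uniqueness

section Multiplicities

variable {R V I T : Type*} [Ring R] [AddCommGroup V] [Module R V]

/-- Collect isomorphic factors of a finite product of submodules. -/
lemma nonempty_pi_equiv_pi_fiber [Fintype T] [DecidableEq I] (N : I → Submodule R V) (f : T → I) :
    Nonempty ((Π t, N (f t)) ≃ₗ[R] Π p, (Fin (Fintype.card {t // f t = p}) → N p)) := by
  refine ⟨(LinearEquiv.piCongrLeft R (fun t => N (f t)) (Equiv.sigmaFiberEquiv f)).symm ≪≫ₗ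
    LinearEquiv.piCongrRight (fun s => LinearEquiv.ofEq _ (N s.1) (congrArg N s.2.2)) ≪≫ₗ
    LinearEquiv.piCurry R (fun p (_ : {t // f t = p}) => N p) ≪≫ₗ
    LinearEquiv.piCongrRight fun p =>
      LinearEquiv.funCongrLeft R (N p) (Fintype.equivFin {t // f t = p}).symm⟩

lemma nonempty_directSum_equiv_pi_sigma [Fintype I] [DecidableEq I] (N : I → Submodule R V)
    (l : I → ℕ) :
    Nonempty ((⨁ p, (Fin (l p) → N p)) ≃ₗ[R] Π s : (Σ p, Fin (l p)), N s.1) :=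
  ⟨DirectSum.linearEquivFunOnFintype R I (fun p => Fin (l p) → N p) ≪≫ₗ
    (LinearEquiv.piCurry R (fun p (_ : Fin (l p)) => N p)).symm⟩

lemma card_fiber_sigma_fst [Fintype I] [DecidableEq I] (l : I → ℕ) (p : I) :
    Fintype.card {s : (Σ p, Fin (l p)) // s.1 = p} = l p := by
  rw [Fintype.card_congr (Equiv.sigmaSubtype p), Fintype.card_fin]

end Multiplicities

/-- Every Cohen–Macaulay `Λ`-module is isomorphic to a finite direct sum
`⊕_{1 ≤ i < j ≤ n} (i,j)^{l_{ij}}`, with uniquely determined multiplicities `l_{ij}`.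
Here multiplicities are indexed by `(i, j) : Fin n × Fin n` (0-based), the pair `(i,j)`
corresponding to the module `(i+1, j+1)` (1-based); the multiplicity is required to vanish
unless `i < j`. -/
theorem statement5 (K : Type) [Field K] (n : ℕ) (hn : 3 ≤ n)
    (Λ : Subalgebra (Polynomial K) (Matrix (Fin n) (Fin n) (RatFunc K)))
    (hΛ : (Λ : Set (Matrix (Fin n) (Fin n) (RatFunc K))) = lambdaCarrier K n)
    (E : ℕ → ℕ → Submodule ↥Λ (Fin n → RatFunc K))
    (hE : ∀ i j : ℕ, 1 ≤ i → i < j → j ≤ n →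
      (E i j : Set (Fin n → RatFunc K)) = ijSet K n i j)
    (M : Type u) [AddCommGroup M] [Module ↥Λ M]
    [Module (Polynomial K) M] [IsScalarTower (Polynomial K) ↥Λ M]
    (hfin : Module.Finite (Polynomial K) M)
    (htf : NoZeroSMulDivisors (Polynomial K) M) :
    ∃! l : Fin n → Fin n → ℕ,
      (∀ i j : Fin n, ¬ i < j → l i j = 0) ∧
      Nonempty (M ≃ₗ[↥Λ]
        (⨁ p : Fin n × Fin n, (Fin (l p.1 p.2) → ↥(E ((p.1 : ℕ) + 1) ((p.2 : ℕ) + 1))))) := by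
  obtain ⟨r, rfl⟩ : ∃ r, n = r + 1 := ⟨n - 1, by omega⟩
  have : Module.IsTorsionFree K[X] M :=
    ⟨fun c hc x y hxy => by
      have h : c • (x - y) = 0 := by rw [smul_sub, sub_eq_zero]; exact hxy
      exact sub_eq_zero.1 ((htf.eq_zero_or_eq_zero_of_smul_eq_zero h).resolve_left hc.ne_zero)⟩
  let N : Fin (r + 1) × Fin (r + 1) → Submodule Λ (Fin (r + 1) → RatFunc K) :=
    fun p => E ((p.1 : ℕ) + 1) ((p.2 : ℕ) + 1)
  obtain ⟨m, f, hf, ⟨φ⟩⟩ := exists_linearEquiv_pi (M := M) hΛ hE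
  obtain ⟨ψ⟩ := nonempty_pi_equiv_pi_fiber N f
  refine ⟨fun i j => Fintype.card {t // f t = (i, j)}, ⟨fun i j hij => ?_, ⟨?_⟩⟩, ?_⟩
  · rw [Fintype.card_eq_zero_iff]
    refine ⟨fun t => hij ?_⟩
    have := hf t
    rwa [t.2] at this
  · exact φ ≪≫ₗ ψ ≪≫ₗ (DirectSum.linearEquivFunOnFintype Λ _
      (fun p => Fin (Fintype.card {t // f t = p}) → N p)).symm
  · rintro l ⟨hl, ⟨χ⟩⟩
    obtain ⟨ω⟩ := nonempty_directSum_equiv_pi_sigma N (fun p => l p.1 p.2)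
    funext i j
    have hlt : ∀ s : (Σ p : Fin (r + 1) × Fin (r + 1), Fin (l p.1 p.2)), s.1.1 < s.1.2 := by
      rintro ⟨p, t⟩
      by_contra h
      exact (Fin.cast (hl p.1 p.2 h) t).elim0
    have h := card_fiber_eq_of_linearEquiv hΛ hE hf hlt (φ.symm ≪≫ₗ χ ≪≫ₗ ω) (i, j)
    rw [card_fiber_sigma_fst (fun p : Fin (r + 1) × Fin (r + 1) => l p.1 p.2)] at h
    exact h.symm
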